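/- Let ζ = e^{πi/12}, ω = e^{2πi/3}, let G_31 ⊂ GL_4(C) be the finite complex reflection group generated by the 60 order-2 reflections s(v) whose roots v are: e_a − i^k e_b (1 ≤ a < b ≤ 4, 0 ≤ k < 4), e_a (1 ≤ a ≤ 4), and the vectors (i^{a_1}, i^{a_2}, i^{a_3}, i^{a_4})^T with a_1 + a_2 + a_3 + a_4 even. Let g = s(e_4) s(e_1 − e_2) s(e_1 + e_4) s(e_1 + i e_2 + e_3 − i e_4) s(e_1 + e_2 + e_3 + e_4). Let E be the ζ^2-eigenspace of g^2, a 2-dimensional subspace, N_E = {s ∈ G_31 : s(E) ⊆ E}, and π_E restriction to E. Then there exists a C-linear isomorphism ψ : E → C^2 such that ψ ∘ π_E(N_E) ∘ ψ^{−1} = G_10, where G_10 ⊂ GL_2(C) is generated by r_1 = (ω/2)·[[−1−i, 1−i], [−1−i, −1+i]] and r_4' = (1/2)·[[1+i, −1+i], [−1+i, 1+i]]. In other words, the 12-reflection subquotient of G_31 is isomorphic to G_10. -/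

import Mathlib

open Matrix MvPolynomial

namespace Paper

noncomputable section

/-- The standard Hermitian inner product `(v, w) = Σ v_i conj(w_i)` on `ℂ^N`. -/
def herm {N : ℕ} (v w : Fin N → ℂ) : ℂ := ∑ i, v i * (starRingEnd ℂ) (w i)

/-- The reflection `s(v, λ) : w ↦ w - (1 - λ) ((w,v)/(v,v)) v` with root `v` and
nontrivial eigenvalue `λ`, as a matrix. -/
def reflMat {N : ℕ} (v : Fin N → ℂ) (lam : ℂ) : Matrix (Fin N) (Fin N) ℂ :=
  Matrix.of fun i j =>
    (if i = j then (1 : ℂ) else 0) - (1 - lam) * v i * (starRingEnd ℂ) (v j) / herm v v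

/-- The monomial matrix `ι(θ, σ)` with `e_i ↦ θ_{σ(i)} e_{σ(i)}`. -/
def monomialMatrix {N : ℕ} (θ : Fin N → ℂ) (σ : Equiv.Perm (Fin N)) :
    Matrix (Fin N) (Fin N) ℂ :=
  Matrix.of fun j i => if j = σ i then θ (σ i) else 0

/-- The imprimitive reflection group `G(m, p, N)`: all monomial `N × N` matrices whose
nonzero entries are `m`-th roots of unity and whose product of nonzero entries is an
`(m/p)`-th root of unity. -/
def Gimp (m p N : ℕ) : Set (Matrix (Fin N) (Fin N) ℂ) :=
  {M | ∃ (θ : Fin N → ℂ) (σ : Equiv.Perm (Fin N)),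
    (∀ i, θ i ^ m = 1) ∧ (∏ i, θ i) ^ (m / p) = 1 ∧ M = monomialMatrix θ σ}

/-- The `μ`-eigenspace of (the linear map of) a matrix. -/
def eigSpace {n : ℕ} (M : Matrix (Fin n) (Fin n) ℂ) (μ : ℂ) : Submodule ℂ (Fin n → ℂ) :=
  Module.End.eigenspace M.mulVecLin μ

/-- The 60 roots of `G₃₁`: `e_a - i^k e_b` (`a < b`, `0 ≤ k < 4`), `e_a`, and the
vectors `(i^{t_1}, i^{t_2}, i^{t_3}, i^{t_4})` with `t_1 + t_2 + t_3 + t_4` even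
(the `G(4,2,4)`-orbit of `e_1 + e_2 + e_3 + e_4`). -/
def rootsG31 : Set (Fin 4 → ℂ) :=
  {v | ∃ (p q : Fin 4) (k : ℕ), p < q ∧ k < 4 ∧
    v = (Pi.single p 1 : Fin 4 → ℂ) - Complex.I ^ k • (Pi.single q 1 : Fin 4 → ℂ)} ∪
  {v | ∃ p : Fin 4, v = (Pi.single p 1 : Fin 4 → ℂ)} ∪
  {v | ∃ t : Fin 4 → ℕ, Even (t 0 + t 1 + t 2 + t 3) ∧ v = fun i => Complex.I ^ t i}

/-!
Every root reflection of `G₃₁` preserves `Λ = gaussianE8`, the Gaussian form of the `E₈` lattice,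
so `G₃₁` acts on `Λ` by unitary matrices. An element of `G₃₁` that stabilizes `E` therefore
preserves, in suitable coordinates on `E`, the orthogonal projection of `Λ` to `E`, which is the
lattice `L = congruentPairs` of pairs in `ℤ[ζ₁₂]²` congruent modulo `1 + i`; hence the subquotient
is contained in the unitary group `U(L)`. This group is `G₁₀`: already `G₁₀` is transitive on the
vectors of norm two in `L`, and the stabilizer in `U(L)` of one of them is cyclic of order four,
generated by an element of `G₁₀`. Conversely, the generators of `G₁₀` are the restrictions to `E`
of products of two and of three reflections of `G₃₁`.
-/

section UnitaryPreserving

variable {n : Type*} [Fintype n] [DecidableEq n]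

/-- The monoid `U(L)` of unitary matrices that map the set of vectors `L`, in practice a
lattice, into itself. -/
def latticeUnitary (L : Set (n → ℂ)) : Submonoid (Matrix n n ℂ) where
  carrier := {M | M ∈ unitaryGroup n ℂ ∧ ∀ x ∈ L, M *ᵥ x ∈ L}
  one_mem' := ⟨one_mem _, fun x hx => by rwa [one_mulVec]⟩
  mul_mem' := fun hA hB =>
    ⟨mul_mem hA.1 hB.1, fun x hx => by
      rw [← mulVec_mulVec]
      exact hA.2 _ (hB.2 x hx)⟩

end UnitaryPreserving

section Reflections

variable {N : ℕ} {v : Fin N → ℂ} {lam : ℂ}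

lemma herm_eq_dotProduct (v w : Fin N → ℂ) : herm v w = v ⬝ᵥ star w := rfl

lemma star_herm_self (v : Fin N → ℂ) : star (herm v v) = herm v v := by
  rw [herm_eq_dotProduct, ← star_dotProduct_star, star_star]

lemma herm_smul_smul (c : ℂ) (v : Fin N → ℂ) :
    herm (c • v) (c • v) = c * star c * herm v v := by
  simp only [herm_eq_dotProduct, star_smul, smul_dotProduct, dotProduct_smul, smul_eq_mul]
  ring

lemma herm_mulVec_mulVec {M : Matrix (Fin N) (Fin N) ℂ} (hM : M ∈ unitaryGroup (Fin N) ℂ)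
    (v w : Fin N → ℂ) : herm (M *ᵥ v) (M *ᵥ w) = herm v w := by
  rw [herm_eq_dotProduct, herm_eq_dotProduct, dotProduct_comm, star_mulVec, dotProduct_mulVec,
    vecMul_vecMul, ← star_eq_conjTranspose, mem_unitaryGroup_iff'.mp hM, vecMul_one,
    dotProduct_comm]

lemma reflMat_eq (v : Fin N → ℂ) (lam : ℂ) :
    reflMat v lam = 1 - ((1 - lam) / herm v v) • vecMulVec v (star v) := by
  ext i j
  simp only [reflMat, of_apply, Matrix.sub_apply, one_apply, Matrix.smul_apply, vecMulVec_apply,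
    smul_eq_mul, Pi.star_apply, RCLike.star_def]
  ring

lemma reflMat_mulVec (v w : Fin N → ℂ) (lam : ℂ) :
    reflMat v lam *ᵥ w = w - ((1 - lam) * herm w v / herm v v) • v := by
  rw [reflMat_eq, sub_mulVec, one_mulVec, smul_mulVec, vecMulVec_mulVec, op_smul_eq_smul,
    smul_smul, dotProduct_comm, ← herm_eq_dotProduct, div_mul_eq_mul_div]

lemma reflMat_smul {c : ℂ} (hc : c ≠ 0) (v : Fin N → ℂ) (lam : ℂ) :
    reflMat (c • v) lam = reflMat v lam := by
  have hc' : star c ≠ 0 := star_ne_zero.mpr hc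
  simp only [reflMat_eq, herm_eq_dotProduct, star_smul, vecMulVec_smul, smul_vecMulVec, smul_smul,
    smul_dotProduct, dotProduct_smul, smul_eq_mul]
  congr 2
  field_simp

lemma reflMat_mem_unitaryGroup (hlam : lam * star lam = 1) :
    reflMat v lam ∈ unitaryGroup (Fin N) ℂ := by
  rw [mem_unitaryGroup_iff]
  set P := vecMulVec v (star v) with hP
  set k := (1 - lam) / herm v v with hk
  have hP_sq : P * P = herm v v • P := by
    rw [hP, vecMulVec_mul_vecMulVec, herm_eq_dotProduct, dotProduct_comm, vecMulVec_smul]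
  have hP_star : star P = P := by
    rw [hP, star_eq_conjTranspose, conjTranspose_vecMulVec, star_star]
  have hk_star : k + star k = k * star k * herm v v := by
    rw [hk, star_div₀, star_sub, star_one, star_herm_self]
    rcases eq_or_ne (herm v v) 0 with h0 | h0
    · simp only [h0, div_zero, mul_zero, add_zero]
    · field_simp
      linear_combination -hlam
  calc reflMat v lam * star (reflMat v lam)
      = (1 - k • P) * (1 - star k • P) := by
        rw [reflMat_eq, ← hP, ← hk, star_sub, star_one, star_smul, hP_star]
    _ = 1 - (k + star k) • P + (k * star k) • (P * P) := by
        rw [sub_mul, mul_sub, mul_sub, smul_mul_smul_comm, one_mul, one_mul, mul_one, add_smul]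
        abel
    _ = 1 := by rw [hP_sq, smul_smul, hk_star, sub_add_cancel]

lemma reflMat_neg_one_mem_latticeUnitary {R : Subring ℂ} {L : Submodule R (Fin N → ℂ)}
    (hv : v ∈ L) (h : ∀ x ∈ L, 2 * herm x v / herm v v ∈ R) :
    reflMat v (-1) ∈ latticeUnitary (L : Set (Fin N → ℂ)) := by
  refine ⟨reflMat_mem_unitaryGroup (by simp), fun x hx => ?_⟩
  rw [reflMat_mulVec, show (1 : ℂ) - -1 = 2 by norm_num]
  exact L.sub_mem hx (L.smul_mem ⟨_, h x hx⟩ hv)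

end Reflections

section Gaussian

open Complex

/-- The ring `ℤ[i]` of Gaussian integers, as a subring of `ℂ`. -/
def gaussianInts : Subring ℂ := GaussianInt.toComplex.range

lemma mem_gaussianInts {x : ℂ} : x ∈ gaussianInts ↔ ∃ a b : ℤ, x = a + b * I := by
  constructor
  · rintro ⟨x, rfl⟩
    exact ⟨x.re, x.im, GaussianInt.toComplex_def x⟩
  · rintro ⟨a, b, rfl⟩
    exact ⟨⟨a, b⟩, GaussianInt.toComplex_def _⟩

lemma normSq_one_add_I : normSq (1 + I) = 2 := by
  norm_num [normSq_apply]

lemma one_add_I_ne_zero : 1 + I ≠ 0 :=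
  normSq_pos.mp (normSq_one_add_I ▸ two_pos)

lemma I_mem_gaussianInts : I ∈ gaussianInts :=
  mem_gaussianInts.mpr ⟨0, 1, by simp⟩

lemma star_mem_gaussianInts {x : ℂ} (hx : x ∈ gaussianInts) : star x ∈ gaussianInts := by
  obtain ⟨x, rfl⟩ := hx
  exact ⟨star x, GaussianInt.toComplex_star x⟩

lemma I_pow_mul_star_I_pow (n : ℕ) : I ^ n * star (I ^ n) = 1 := by
  rw [star_pow, ← mul_pow, RCLike.star_def, conj_I, mul_neg, I_mul_I, neg_neg, one_pow]

lemma I_pow_eq_add_two_mul (n : ℕ) : ∃ w ∈ gaussianInts, I ^ n = 1 + n * (I - 1) + 2 * w := by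
  induction n with
  | zero => exact ⟨0, zero_mem _, by simp⟩
  | succ n ih =>
    obtain ⟨w, hw, h⟩ := ih
    refine ⟨(w - n) * I, mul_mem (sub_mem hw (natCast_mem _ n)) I_mem_gaussianInts, ?_⟩
    push_cast
    linear_combination I * h + n * I_sq

/-- The Gaussian form of the `E₈` lattice: the vectors `x ∈ ℤ[i]⁴` whose entries are all congruent
modulo `1 + i` and have even sum. -/
def gaussianE8 : Submodule gaussianInts (Fin 4 → ℂ) where
  carrier := {x | x 0 ∈ gaussianInts ∧ (∀ j, ∃ w ∈ gaussianInts, x j = x 0 + (1 + I) * w) ∧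
    ∃ w ∈ gaussianInts, ∑ j, x j = 2 * w}
  zero_mem' := ⟨zero_mem _, fun _ => ⟨0, zero_mem _, by simp⟩, 0, zero_mem _, by simp⟩
  add_mem' := by
    rintro x y ⟨hx0, hx, s, hs, hxs⟩ ⟨hy0, hy, t, ht, hyt⟩
    refine ⟨add_mem hx0 hy0, fun j => ?_, s + t, add_mem hs ht, ?_⟩
    · obtain ⟨⟨a, ha, hxa⟩, b, hb, hyb⟩ := And.intro (hx j) (hy j)
      exact ⟨a + b, add_mem ha hb, by simp only [Pi.add_apply, hxa, hyb]; ring⟩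
    · simp only [Pi.add_apply, Finset.sum_add_distrib, hxs, hyt]; ring
  smul_mem' := by
    rintro ⟨c, hc⟩ x ⟨hx0, hx, s, hs, hxs⟩
    refine ⟨mul_mem hc hx0, fun j => ?_, c * s, mul_mem hc hs, ?_⟩
    · obtain ⟨a, ha, hxa⟩ := hx j
      exact ⟨c * a, mul_mem hc ha, by
        simp only [Pi.smul_apply, Subring.smul_def, smul_eq_mul, hxa]; ring⟩
    · simp only [Pi.smul_apply, Subring.smul_def, smul_eq_mul, ← Finset.mul_sum, hxs]; ring

lemma herm_div_two_mem_of_mem_gaussianE8 {x y : Fin 4 → ℂ} (hx : x ∈ gaussianE8)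
    (hy : y ∈ gaussianE8) : herm x y / 2 ∈ gaussianInts := by
  obtain ⟨hx0, hx, s, hs, hxs⟩ := hx
  obtain ⟨hy0, hy, t, ht, hyt⟩ := hy
  choose a ha hxa using hx
  choose b hb hyb using hy
  have key : herm x y / 2 = x 0 * star t + star (y 0) * (s - 2 * x 0) + ∑ j, a j * star (b j) := by
    have hyt' : ∑ j, star (y j) = 2 * star t := by
      rw [← star_sum, hyt, star_mul', star_ofNat]
    have hstar (j) : star (y j) = star (y 0) + (1 - I) * star (b j) := by
      rw [hyb j]; simp [sub_eq_add_neg]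
    have hterm (j) : x j * star (y j) =
        x 0 * star (y j) + star (y 0) * (x j - x 0) + 2 * (a j * star (b j)) := by
      linear_combination (x j - x 0) * hstar j + (1 - I) * star (b j) * hxa j
        - a j * star (b j) * I_sq
    simp only [herm, ← RCLike.star_def, hterm, Finset.sum_add_distrib, ← Finset.mul_sum, hyt',
      Finset.sum_sub_distrib, hxs, Finset.sum_const, Finset.card_univ, Fintype.card_fin]
    ring
  rw [key]
  have h2 : (2 : ℂ) ∈ gaussianInts := ofNat_mem _ 2
  exact add_mem (add_mem (mul_mem hx0 (star_mem_gaussianInts ht))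
    (mul_mem (star_mem_gaussianInts hy0) (sub_mem hs (mul_mem h2 hx0))))
    (sum_mem fun j _ => mul_mem (ha j) (star_mem_gaussianInts (hb j)))

lemma reflMat_mem_latticeUnitary_gaussianE8 {v : Fin 4 → ℂ} {c : ℂ} (hc : c ≠ 0)
    (hv : c • v ∈ gaussianE8) (hnorm : c * star c * herm v v = 4) :
    reflMat v (-1) ∈ latticeUnitary (gaussianE8 : Set (Fin 4 → ℂ)) := by
  rw [← reflMat_smul hc]
  refine reflMat_neg_one_mem_latticeUnitary hv fun x hx => ?_
  rw [herm_smul_smul, hnorm, show 2 * herm x (c • v) / 4 = herm x (c • v) / 2 by ring]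
  exact herm_div_two_mem_of_mem_gaussianE8 hx hv

lemma one_add_I_smul_mem_gaussianE8 {y : Fin 4 → ℂ} (hy : ∀ j, y j ∈ gaussianInts)
    (hsum : ∃ w ∈ gaussianInts, ∑ j, y j = (1 - I) * w) : (1 + I) • y ∈ gaussianE8 := by
  obtain ⟨w, hw, hyw⟩ := hsum
  refine ⟨mul_mem (add_mem (one_mem _) I_mem_gaussianInts) (hy 0),
    fun j => ⟨y j - y 0, sub_mem (hy j) (hy 0), ?_⟩, w, hw, ?_⟩
  · simp only [Pi.smul_apply, smul_eq_mul]
    ring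
  · simp only [Pi.smul_apply, smul_eq_mul, ← Finset.mul_sum, hyw]
    linear_combination -w * I_sq

lemma I_pow_mem_gaussianE8 {t : Fin 4 → ℕ} (ht : Even (t 0 + t 1 + t 2 + t 3)) :
    (fun j => I ^ t j) ∈ gaussianE8 := by
  choose w hw hIw using fun j => I_pow_eq_add_two_mul (t j)
  have h2 : (2 : ℂ) = (1 + I) * (1 - I) := by linear_combination I_sq
  refine ⟨pow_mem I_mem_gaussianInts _, fun j => ?_, ?_⟩
  · refine ⟨((t j : ℂ) - t 0) * I + (1 - I) * (w j - w 0), ?_, ?_⟩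
    · have hI := I_mem_gaussianInts
      exact add_mem (mul_mem (sub_mem (natCast_mem _ _) (natCast_mem _ _)) hI)
        (mul_mem (sub_mem (one_mem _) hI) (sub_mem (hw j) (hw 0)))
    · linear_combination hIw j - hIw 0 + (w j - w 0) * h2 - ((t j : ℂ) - t 0) * I_sq
  · obtain ⟨m, hm⟩ := ht
    have hm' : ∑ j, (t j : ℂ) = m + m := by
      rw [Fin.sum_univ_four]
      exact_mod_cast hm
    refine ⟨2 + m * (I - 1) + ∑ j, w j, add_mem (add_mem (ofNat_mem _ 2)
      (mul_mem (natCast_mem _ m) (sub_mem I_mem_gaussianInts (one_mem _))))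
      (sum_mem fun j _ => hw j), ?_⟩
    simp only [hIw, Finset.sum_add_distrib, ← Finset.sum_mul, ← Finset.mul_sum, hm',
      Finset.sum_const, Finset.card_univ, Fintype.card_fin, nsmul_eq_mul]
    ring

lemma reflMat_single_sub_smul_single_mem {p q : Fin 4} (hpq : p ≠ q) (k : ℕ) :
    reflMat (Pi.single p 1 - I ^ k • Pi.single q 1) (-1) ∈
      latticeUnitary (gaussianE8 : Set (Fin 4 → ℂ)) := by
  have hnorm : (1 + I) * star (1 + I) = 2 := by
    rw [RCLike.star_def, mul_conj, normSq_one_add_I, ofReal_ofNat]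
  refine reflMat_mem_latticeUnitary_gaussianE8 one_add_I_ne_zero
    (one_add_I_smul_mem_gaussianE8 (fun j => ?_) ?_) ?_
  · simp only [Pi.sub_apply, Pi.smul_apply, smul_eq_mul, Pi.single_apply]
    have hI := pow_mem I_mem_gaussianInts k
    split_ifs <;> simp [hI, sub_mem, one_mem]
  · obtain ⟨w, hw, hk⟩ := I_pow_eq_add_two_mul k
    refine ⟨k - (1 + I) * w, sub_mem (natCast_mem _ k)
      (mul_mem (add_mem (one_mem _) I_mem_gaussianInts) hw), ?_⟩
    simp only [Pi.sub_apply, Pi.smul_apply, smul_eq_mul, Finset.sum_sub_distrib, ← Finset.mul_sum,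
      Finset.sum_pi_single', Finset.mem_univ, if_true]
    linear_combination -hk - w * I_sq
  · have hunit : (-I) ^ k * I ^ k = 1 := by simpa [mul_comm] using I_pow_mul_star_I_pow k
    rw [hnorm]
    norm_num [herm_eq_dotProduct, dotProduct_sub, hpq, hpq.symm, hunit]

lemma reflMat_single_mem (p : Fin 4) :
    reflMat (Pi.single p 1) (-1) ∈ latticeUnitary (gaussianE8 : Set (Fin 4 → ℂ)) := by
  have hc : (1 + I) * (1 - I) = 2 := by linear_combination -I_sq
  refine reflMat_mem_latticeUnitary_gaussianE8 two_ne_zero ?_ ?_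
  · rw [← hc, ← smul_smul]
    refine one_add_I_smul_mem_gaussianE8 (fun j => ?_) ⟨1, one_mem _, ?_⟩
    · rw [Pi.smul_apply, Pi.single_apply, smul_eq_mul]
      have hI := I_mem_gaussianInts
      split_ifs <;> simp [hI, sub_mem, one_mem]
    · simp [← Finset.mul_sum]
  · norm_num [herm_eq_dotProduct]

/-- The reflection group `G₃₁`, as a monoid of matrices: its generators have finite order. -/
def reflGroup31 : Submonoid (Matrix (Fin 4) (Fin 4) ℂ) :=
  Submonoid.closure {M | ∃ v ∈ rootsG31, M = reflMat v (-1)}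

theorem reflGroup31_le_latticeUnitary :
    reflGroup31 ≤ latticeUnitary (gaussianE8 : Set (Fin 4 → ℂ)) := by
  refine Submonoid.closure_le.mpr ?_
  rintro _ ⟨v, (⟨p, q, k, hpq, -, rfl⟩ | ⟨p, rfl⟩) | ⟨t, ht, rfl⟩, rfl⟩
  · exact reflMat_single_sub_smul_single_mem hpq.ne k
  · exact reflMat_single_mem p
  · refine reflMat_mem_latticeUnitary_gaussianE8 one_ne_zero
      (by rw [one_smul]; exact I_pow_mem_gaussianE8 ht) ?_
    simp only [herm, ← RCLike.star_def, I_pow_mul_star_I_pow]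
    simp

end Gaussian

section Cyclotomic

open Complex

/-- The primitive cube root of unity `e^{2πi/3}`. -/
def ω₃ : ℂ := exp (2 * Real.pi * I / 3)

/-- The primitive twelfth root of unity `e^{πi/6}`, written in terms of `i` and `ω₃`. -/
def ζ₁₂ : ℂ := -I * ω₃

lemma ω₃_eq : ω₃ = -1 / 2 + √3 / 2 * I := by
  have harg : 2 * Real.pi * I / 3 = ((Real.pi - Real.pi / 3 : ℝ) : ℂ) * I := by
    push_cast
    ring
  rw [ω₃, harg, exp_mul_I, ← ofReal_cos, ← ofReal_sin, Real.cos_pi_sub, Real.sin_pi_sub,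
    Real.cos_pi_div_three, Real.sin_pi_div_three]
  push_cast
  ring

lemma ω₃_sq : ω₃ ^ 2 = -1 - ω₃ := by
  have h3 : (√3 : ℂ) ^ 2 = 3 := by exact_mod_cast Real.sq_sqrt (by norm_num : (0 : ℝ) ≤ 3)
  rw [ω₃_eq]
  linear_combination (-1 / 4 : ℂ) * h3 + (√3 : ℂ) ^ 2 / 4 * I_sq

lemma star_ω₃ : star ω₃ = -1 - ω₃ := by
  apply Complex.ext
  · norm_num [ω₃_eq]
  · simp [ω₃_eq]

lemma ζ₁₂_sq : ζ₁₂ ^ 2 = 1 + ω₃ := by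
  rw [ζ₁₂]
  linear_combination ω₃ ^ 2 * I_sq - ω₃_sq

lemma ζ₁₂_pow_three : ζ₁₂ ^ 3 = I := by
  rw [pow_succ, ζ₁₂_sq, ζ₁₂]
  linear_combination -I * ω₃_sq

lemma ζ₁₂_pow_four : ζ₁₂ ^ 4 = ω₃ := by
  rw [pow_mul ζ₁₂ 2 2, ζ₁₂_sq]
  linear_combination ω₃_sq

lemma ζ₁₂_pow_twelve : ζ₁₂ ^ 12 = 1 := by
  rw [pow_mul ζ₁₂ 3 4, ζ₁₂_pow_three, I_pow_four]

/-- The ring `ℤ[ζ₁₂] = ℤ[i] + ℤ[i] ω₃` of integers of the twelfth cyclotomic field. -/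
def cyclotomicInts : Subring ℂ where
  carrier := {x | ∃ α ∈ gaussianInts, ∃ β ∈ gaussianInts, x = α + β * ω₃}
  zero_mem' := ⟨0, zero_mem _, 0, zero_mem _, by simp⟩
  one_mem' := ⟨1, one_mem _, 0, zero_mem _, by simp⟩
  add_mem' := by
    rintro _ _ ⟨α, hα, β, hβ, rfl⟩ ⟨γ, hγ, δ, hδ, rfl⟩
    exact ⟨α + γ, add_mem hα hγ, β + δ, add_mem hβ hδ, by ring⟩
  neg_mem' := by
    rintro _ ⟨α, hα, β, hβ, rfl⟩
    exact ⟨-α, neg_mem hα, -β, neg_mem hβ, by ring⟩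
  mul_mem' := by
    rintro _ _ ⟨α, hα, β, hβ, rfl⟩ ⟨γ, hγ, δ, hδ, rfl⟩
    refine ⟨α * γ - β * δ, sub_mem (mul_mem hα hγ) (mul_mem hβ hδ), α * δ + β * γ - β * δ,
      sub_mem (add_mem (mul_mem hα hδ) (mul_mem hβ hγ)) (mul_mem hβ hδ), ?_⟩
    linear_combination β * δ * ω₃_sq

lemma gaussianInts_le_cyclotomicInts : gaussianInts ≤ cyclotomicInts :=
  fun α hα => ⟨α, hα, 0, zero_mem _, by simp⟩

lemma I_mem_cyclotomicInts : I ∈ cyclotomicInts :=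
  gaussianInts_le_cyclotomicInts I_mem_gaussianInts

lemma one_add_I_mem_cyclotomicInts : 1 + I ∈ cyclotomicInts :=
  add_mem (one_mem _) I_mem_cyclotomicInts

lemma ω₃_mem_cyclotomicInts : ω₃ ∈ cyclotomicInts :=
  ⟨0, zero_mem _, 1, one_mem _, by simp⟩

lemma ζ₁₂_mem_cyclotomicInts : ζ₁₂ ∈ cyclotomicInts :=
  mul_mem (neg_mem I_mem_cyclotomicInts) ω₃_mem_cyclotomicInts

lemma eq_zero_of_int_add_int_mul_sqrt_three_eq_zero {m k : ℤ} (h : (m : ℝ) + k * √3 = 0) :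
    m = 0 ∧ k = 0 := by
  have hirr : Irrational (√3) := by simpa using Nat.prime_three.irrational_sqrt
  have hk : k = 0 := by
    by_contra hk
    refine (hirr.intCast_mul hk).ne_int (-m) ?_
    push_cast
    linarith
  refine ⟨?_, hk⟩
  simpa [hk] using h

lemma normSq_eisenstein_add_eisenstein_mul_I (a b c d : ℤ) :
    normSq ((a + b * ω₃) + (c + d * ω₃) * I) =
      ((a ^ 2 - a * b + b ^ 2 + (c ^ 2 - c * d + d ^ 2) : ℤ) : ℝ) + (b * c - a * d : ℤ) * √3 := by
  have h3 : √3 ^ 2 = 3 := Real.sq_sqrt (by norm_num)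
  have hxy : ((a + b * ω₃) + (c + d * ω₃) * I : ℂ) =
      (a - b / 2 - d * √3 / 2 : ℝ) + (c - d / 2 + b * √3 / 2 : ℝ) * I := by
    rw [ω₃_eq]
    push_cast
    linear_combination d * √3 / 2 * I_sq
  rw [hxy, normSq_add_mul_I]
  push_cast
  linear_combination (b ^ 2 + d ^ 2) / 4 * h3

lemma eisenstein_norm_nonneg (a b : ℤ) : 0 ≤ a ^ 2 - a * b + b ^ 2 := by
  nlinarith [sq_nonneg (2 * a - b), sq_nonneg b]

lemma eq_zero_of_eisenstein_norm_eq_zero {a b : ℤ} (h : a ^ 2 - a * b + b ^ 2 = 0) :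
    a = 0 ∧ b = 0 := by
  have hb : b = 0 := by nlinarith [sq_nonneg (2 * a - b), sq_nonneg b]
  subst hb
  simpa using h

lemma exists_eq_ζ₁₂_pow_of_eisenstein_norm_eq_one {a b : ℤ} (h : a ^ 2 - a * b + b ^ 2 = 1) :
    ∃ j : ℕ, (a + b * ω₃ : ℂ) = ζ₁₂ ^ j := by
  have hb : -1 ≤ b ∧ b ≤ 1 := by constructor <;> nlinarith [sq_nonneg (2 * a - b)]
  have ha : -1 ≤ a ∧ a ≤ 1 := by constructor <;> nlinarith [sq_nonneg (2 * b - a)]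
  have hab : a = 1 ∧ b = 0 ∨ a = 1 ∧ b = 1 ∨ a = 0 ∧ b = 1 ∨ a = -1 ∧ b = 0 ∨
      a = -1 ∧ b = -1 ∨ a = 0 ∧ b = -1 := by
    obtain ⟨⟨_, _⟩, _, _⟩ := And.intro ha hb
    interval_cases a <;> interval_cases b <;> simp_all
  rcases hab with ⟨rfl, rfl⟩ | ⟨rfl, rfl⟩ | ⟨rfl, rfl⟩ | ⟨rfl, rfl⟩ | ⟨rfl, rfl⟩ | ⟨rfl, rfl⟩
  · exact ⟨0, by simp⟩
  · exact ⟨2, by simp [ζ₁₂_sq]⟩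
  · exact ⟨4, by simp [ζ₁₂_pow_four]⟩
  · exact ⟨6, by simp [pow_mul ζ₁₂ 3 2, ζ₁₂_pow_three]⟩
  · exact ⟨8, by simp [pow_mul ζ₁₂ 4 2, ζ₁₂_pow_four, ω₃_sq, sub_eq_add_neg]⟩
  · exact ⟨10, by simp [pow_add ζ₁₂ 4 6, pow_mul ζ₁₂ 3 2, ζ₁₂_pow_three, ζ₁₂_pow_four]⟩

/-- Half the trace of `|x|²` is a positive definite integral form on `ℤ[ζ₁₂]`, represented here by
its value `q`. -/
lemma exists_normSq_eq_add_mul_sqrt_three {x : ℂ} (hx : x ∈ cyclotomicInts) :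
    ∃ (q : ℕ) (k : ℤ), normSq x = q + k * √3 ∧ (q = 0 → x = 0) ∧ (q = 1 → ∃ j, x = ζ₁₂ ^ j) := by
  obtain ⟨α, hα, β, hβ, rfl⟩ := hx
  obtain ⟨a, c, rfl⟩ := mem_gaussianInts.mp hα
  obtain ⟨b, d, rfl⟩ := mem_gaussianInts.mp hβ
  have hx : (a + c * I + (b + d * I) * ω₃ : ℂ) = (a + b * ω₃) + (c + d * ω₃) * I := by ring
  have h₁ := eisenstein_norm_nonneg a b
  have h₂ := eisenstein_norm_nonneg c d
  obtain ⟨q, hq⟩ := Int.eq_ofNat_of_zero_le (add_nonneg h₁ h₂)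
  refine ⟨q, b * c - a * d, ?_, fun h => ?_, fun h => ?_⟩
  · rw [hx, normSq_eisenstein_add_eisenstein_mul_I, hq]
    rfl
  · obtain ⟨rfl, rfl⟩ := eq_zero_of_eisenstein_norm_eq_zero (a := a) (b := b) (by omega)
    obtain ⟨rfl, rfl⟩ := eq_zero_of_eisenstein_norm_eq_zero (a := c) (b := d) (by omega)
    simp
  · rw [hx]
    obtain ⟨h1, h0⟩ | ⟨h0, h1⟩ : (a ^ 2 - a * b + b ^ 2 = 1 ∧ c ^ 2 - c * d + d ^ 2 = 0) ∨
        (a ^ 2 - a * b + b ^ 2 = 0 ∧ c ^ 2 - c * d + d ^ 2 = 1) := by omega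
    · obtain ⟨rfl, rfl⟩ := eq_zero_of_eisenstein_norm_eq_zero h0
      obtain ⟨j, hj⟩ := exists_eq_ζ₁₂_pow_of_eisenstein_norm_eq_one h1
      exact ⟨j, by simp [hj]⟩
    · obtain ⟨rfl, rfl⟩ := eq_zero_of_eisenstein_norm_eq_zero h0
      obtain ⟨j, hj⟩ := exists_eq_ζ₁₂_pow_of_eisenstein_norm_eq_one h1
      exact ⟨j + 3, by simp [hj, pow_add, ζ₁₂_pow_three]⟩

lemma exists_eq_ζ₁₂_pow_of_normSq_eq_one {x : ℂ} (hx : x ∈ cyclotomicInts) (h : normSq x = 1) :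
    ∃ j, x = ζ₁₂ ^ j := by
  obtain ⟨q, k, hq, -, hone⟩ := exists_normSq_eq_add_mul_sqrt_three hx
  have := eq_zero_of_int_add_int_mul_sqrt_three_eq_zero (m := q - 1) (k := k)
    (by push_cast; linarith)
  exact hone (by omega)

lemma normSq_one_sub_ω₃_pow {b : ℕ} (hb : ¬ 3 ∣ b) : normSq (1 - ω₃ ^ b) = 3 := by
  have h3 : √3 ^ 2 = 3 := Real.sq_sqrt (by norm_num)
  have hω : ω₃ ^ 3 = 1 := by linear_combination (ω₃ - 1) * ω₃_sq
  rw [← Nat.div_add_mod b 3, pow_add, pow_mul, hω, one_pow, one_mul]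
  obtain h | h : b % 3 = 1 ∨ b % 3 = 2 := by omega
  · have hxy : 1 - ω₃ = (3 / 2 : ℝ) + (-√3 / 2 : ℝ) * I := by
      rw [ω₃_eq]
      push_cast
      ring
    rw [h, pow_one, hxy, normSq_add_mul_I]
    linear_combination h3 / 4
  · have hxy : 1 - ω₃ ^ 2 = (3 / 2 : ℝ) + (√3 / 2 : ℝ) * I := by
      rw [ω₃_sq, ω₃_eq]
      push_cast
      ring
    rw [h, hxy, normSq_add_mul_I]
    linear_combination h3 / 4

/-- The residue field of `ℤ[ζ₁₂]` at `1 + i` is `𝔽₄`, so only the powers of `i` reduce to `1`. -/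
lemma exists_ζ₁₂_pow_eq_I_pow {b : ℕ} (h : ∃ w ∈ cyclotomicInts, ζ₁₂ ^ b = 1 + (1 + I) * w) :
    ∃ j : ℕ, ζ₁₂ ^ b = I ^ j := by
  obtain ⟨w, hw, h⟩ := h
  by_cases h3 : 3 ∣ b
  · obtain ⟨j, rfl⟩ := h3
    exact ⟨j, by rw [pow_mul, ζ₁₂_pow_three]⟩
  set t := (1 + I) * w with ht
  have ht_mem : t ∈ cyclotomicInts := mul_mem one_add_I_mem_cyclotomicInts hw
  set w' := w * (4 + 6 * t + 4 * t ^ 2 + t ^ 3)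
  have hw' : w' ∈ cyclotomicInts := mul_mem hw (add_mem (add_mem (add_mem (ofNat_mem _ 4)
    (mul_mem (ofNat_mem _ 6) ht_mem)) (mul_mem (ofNat_mem _ 4) (pow_mem ht_mem 2)))
    (pow_mem ht_mem 3))
  have hω : 1 - ω₃ ^ b = -((1 + I) * w') := by
    rw [← ζ₁₂_pow_four, ← pow_mul, mul_comm, pow_mul, h]
    linear_combination (4 + 6 * t + 4 * t ^ 2 + t ^ 3) * -ht
  obtain ⟨q, k, hq, -, -⟩ := exists_normSq_eq_add_mul_sqrt_three hw'
  have hnorm := normSq_one_sub_ω₃_pow h3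
  rw [hω, normSq_neg, normSq_mul, normSq_one_add_I, hq] at hnorm
  have := eq_zero_of_int_add_int_mul_sqrt_three_eq_zero (m := 2 * q - 3) (k := 2 * k)
    (by push_cast; linarith)
  omega

lemma exists_ζ₁₂_pow_eq_mul_I_pow {a b : ℕ}
    (h : ∃ w ∈ cyclotomicInts, ζ₁₂ ^ a = ζ₁₂ ^ b + (1 + I) * w) :
    ∃ j : ℕ, ζ₁₂ ^ b = ζ₁₂ ^ a * I ^ j := by
  obtain ⟨w, hw, h⟩ := h
  have ha_inv : ζ₁₂ ^ (11 * a) * ζ₁₂ ^ a = 1 := by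
    rw [← pow_add, ← Nat.succ_mul, pow_mul, ζ₁₂_pow_twelve, one_pow]
  obtain ⟨j, hj⟩ := exists_ζ₁₂_pow_eq_I_pow (b := 11 * a + b)
    ⟨ζ₁₂ ^ (11 * a) * -w, mul_mem (pow_mem ζ₁₂_mem_cyclotomicInts _) (neg_mem hw), by
      rw [pow_add]
      linear_combination ha_inv - ζ₁₂ ^ (11 * a) * h⟩
  refine ⟨j, ?_⟩
  rw [← hj, pow_add]
  linear_combination -ζ₁₂ ^ b * ha_inv

end Cyclotomic

section RankTwo

open Complex

/-- The `ℤ[ζ₁₂]`-lattice of pairs of cyclotomic integers congruent modulo `1 + i`. It is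
proportional to the orthogonal projection of `gaussianE8` to a `ζ₁₂`-eigenspace. -/
def congruentPairs : Set (Fin 2 → ℂ) :=
  {p | p 1 ∈ cyclotomicInts ∧ ∃ w ∈ cyclotomicInts, p 0 = p 1 + (1 + I) * w}

/-- The generator `r₁` of `G₁₀`, a reflection of order three. -/
def reflThree : Matrix (Fin 2) (Fin 2) ℂ := (ω₃ / 2) • !![-1 - I, 1 - I; -1 - I, -1 + I]

/-- The generator `r₄'` of `G₁₀`, a reflection of order four. -/
def reflFour : Matrix (Fin 2) (Fin 2) ℂ := (1 / 2 : ℂ) • !![1 + I, -1 + I; -1 + I, 1 + I]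

/-- The reflection group `G₁₀`, as a monoid of matrices: its generators have finite order. -/
def reflGroup10 : Submonoid (Matrix (Fin 2) (Fin 2) ℂ) := Submonoid.closure {reflThree, reflFour}

lemma reflThree_mem_reflGroup10 : reflThree ∈ reflGroup10 :=
  Submonoid.subset_closure (Set.mem_insert _ _)

lemma reflFour_mem_reflGroup10 : reflFour ∈ reflGroup10 :=
  Submonoid.subset_closure (Set.mem_insert_of_mem _ rfl)

lemma reflFour_sq : reflFour ^ 2 = -!![0, 1; 1, 0] := by
  ext i j; fin_cases i <;> fin_cases j <;> simp [reflFour, sq] <;> grind [I_sq, ω₃_sq]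

lemma reflThree_sq : reflThree ^ 2 = (ω₃ ^ 2 / 2) • !![-1 + I, -1 + I; 1 + I, -1 - I] := by
  ext i j; fin_cases i <;> fin_cases j <;> simp [reflThree, sq] <;> grind [I_sq, ω₃_sq]

lemma star_reflThree : star reflThree = reflThree ^ 2 := by
  rw [reflThree_sq, ω₃_sq, ← star_ω₃]
  ext i j; fin_cases i <;> fin_cases j <;> simp [reflThree, sub_eq_add_neg]

lemma star_reflFour : star reflFour = reflFour ^ 3 := by
  rw [pow_succ, reflFour_sq]
  ext i j; fin_cases i <;> fin_cases j <;> simp [reflFour] <;> grind [I_sq, ω₃_sq]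

lemma reflThree_pow_three : reflThree ^ 3 = 1 := by
  rw [pow_succ, reflThree_sq]
  ext i j; fin_cases i <;> fin_cases j <;> simp [reflThree] <;> grind [I_sq, ω₃_sq]

lemma reflFour_pow_four : reflFour ^ 4 = 1 := by
  rw [pow_mul reflFour 2 2, reflFour_sq, neg_sq]
  simp [sq, one_fin_two]

lemma star_mem_reflGroup10 {M : Matrix (Fin 2) (Fin 2) ℂ} (hM : M ∈ reflGroup10) :
    star M ∈ reflGroup10 := by
  induction hM using Submonoid.closure_induction with
  | mem M hM =>
    rcases hM with rfl | rfl
    · rw [star_reflThree]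
      exact pow_mem reflThree_mem_reflGroup10 2
    · rw [star_reflFour]
      exact pow_mem reflFour_mem_reflGroup10 3
  | one => rw [star_one]; exact one_mem _
  | mul A B _ _ hA hB => rw [star_mul]; exact mul_mem hB hA

lemma diag_I_one_mem_reflGroup10 : !![I, 0; 0, 1] ∈ reflGroup10 := by
  have h : !![I, 0; 0, 1] = reflThree ^ 2 * reflFour * reflThree := by
    rw [reflThree_sq]
    ext i j; fin_cases i <;> fin_cases j <;> simp [reflFour, reflThree] <;> grind [I_sq, ω₃_sq]
  exact h ▸ mul_mem (mul_mem (pow_mem reflThree_mem_reflGroup10 2) reflFour_mem_reflGroup10)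
    reflThree_mem_reflGroup10

lemma swap_mem_reflGroup10 : !![0, 1; 1, 0] ∈ reflGroup10 := by
  have h : !![0, 1; 1, 0] = !![I, 0; 0, 1] ^ 2 * reflFour ^ 2 * !![I, 0; 0, 1] ^ 2 := by
    rw [reflFour_sq]
    simp [sq]
  have hd := pow_mem diag_I_one_mem_reflGroup10 2
  exact h ▸ mul_mem (mul_mem hd (pow_mem reflFour_mem_reflGroup10 2)) hd

lemma diag_one_I_mem_reflGroup10 : !![1, 0; 0, I] ∈ reflGroup10 := by
  have h : !![1, 0; 0, I] = !![0, 1; 1, 0] * !![I, 0; 0, 1] * !![0, 1; 1, 0] := by simp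
  exact h ▸ mul_mem (mul_mem swap_mem_reflGroup10 diag_I_one_mem_reflGroup10) swap_mem_reflGroup10

lemma diag_one_I_pow (j : ℕ) :
    (!![1, 0; 0, I] : Matrix (Fin 2) (Fin 2) ℂ) ^ j = !![1, 0; 0, I ^ j] := by
  induction j with
  | zero => simp [one_fin_two]
  | succ j ih => simp [pow_succ, ih]

lemma ζ₁₂_smul_one_mem_reflGroup10 : ζ₁₂ • 1 ∈ reflGroup10 := by
  have h : ζ₁₂ • 1 = !![I, 0; 0, 1] * reflThree * reflFour ^ 3 * !![1, 0; 0, I] ^ 2 := by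
    rw [pow_succ, reflFour_sq, ζ₁₂]
    ext i j; fin_cases i <;> fin_cases j <;> simp [sq, reflFour, reflThree] <;> grind [I_sq]
  exact h ▸ mul_mem (mul_mem (mul_mem diag_I_one_mem_reflGroup10 reflThree_mem_reflGroup10)
    (pow_mem reflFour_mem_reflGroup10 3)) (pow_mem diag_one_I_mem_reflGroup10 2)

lemma ζ₁₂_pow_smul_mem_reflGroup10 (k : ℕ) {M : Matrix (Fin 2) (Fin 2) ℂ} (hM : M ∈ reflGroup10) :
    ζ₁₂ ^ k • M ∈ reflGroup10 := by
  have h : ζ₁₂ ^ k • M = (ζ₁₂ • 1) ^ k * M := by rw [smul_pow, one_pow, smul_mul_assoc, one_mul]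
  exact h ▸ mul_mem (pow_mem ζ₁₂_smul_one_mem_reflGroup10 k) hM

lemma reflThree_mulVec (p : Fin 2 → ℂ) : reflThree *ᵥ p =
    (ω₃ / 2) • ![(-1 - I) * p 0 + (1 - I) * p 1, (-1 - I) * p 0 + (-1 + I) * p 1] := by
  rw [reflThree, smul_mulVec]
  congr 1
  ext i; fin_cases i <;> simp [mulVec, dotProduct]

lemma reflFour_mulVec (p : Fin 2 → ℂ) : reflFour *ᵥ p =
    (1 / 2 : ℂ) • ![(1 + I) * p 0 + (-1 + I) * p 1, (-1 + I) * p 0 + (1 + I) * p 1] := by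
  rw [reflFour, smul_mulVec]
  congr 1
  ext i; fin_cases i <;> simp [mulVec, dotProduct]

lemma reflThree_mulVec_mem {p : Fin 2 → ℂ} (hp : p ∈ congruentPairs) :
    reflThree *ᵥ p ∈ congruentPairs := by
  obtain ⟨hp1, w, hw, hp0⟩ := hp
  have hI := I_mem_cyclotomicInts
  have hω := ω₃_mem_cyclotomicInts
  have h0 : (reflThree *ᵥ p) 0 = -ω₃ * I * (p 1 + w) := by
    rw [reflThree_mulVec, Pi.smul_apply, smul_eq_mul, cons_val_zero, hp0]
    linear_combination -ω₃ * w / 2 * I_sq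
  have h1 : (reflThree *ᵥ p) 1 = -ω₃ * (p 1 + I * w) := by
    rw [reflThree_mulVec, Pi.smul_apply, smul_eq_mul, cons_val_one, cons_val_fin_one, hp0]
    linear_combination -ω₃ * w / 2 * I_sq
  refine ⟨h1 ▸ mul_mem (neg_mem hω) (add_mem hp1 (mul_mem hI hw)), -I * ω₃ * p 1,
    mul_mem (mul_mem (neg_mem hI) hω) hp1, ?_⟩
  rw [h0, h1]
  linear_combination ω₃ * p 1 * I_sq

lemma reflFour_mulVec_mem {p : Fin 2 → ℂ} (hp : p ∈ congruentPairs) :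
    reflFour *ᵥ p ∈ congruentPairs := by
  obtain ⟨hp1, w, hw, hp0⟩ := hp
  have hI := I_mem_cyclotomicInts
  have h0 : (reflFour *ᵥ p) 0 = I * (p 1 + w) := by
    rw [reflFour_mulVec, Pi.smul_apply, smul_eq_mul, cons_val_zero, hp0]
    linear_combination w / 2 * I_sq
  have h1 : (reflFour *ᵥ p) 1 = I * p 1 - w := by
    rw [reflFour_mulVec, Pi.smul_apply, smul_eq_mul, cons_val_one, cons_val_fin_one, hp0]
    linear_combination w / 2 * I_sq
  refine ⟨h1 ▸ sub_mem (mul_mem hI hp1) hw, w, hw, ?_⟩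
  rw [h0, h1]
  ring

theorem reflGroup10_le_latticeUnitary : reflGroup10 ≤ latticeUnitary congruentPairs := by
  refine Submonoid.closure_le.mpr ?_
  rintro _ (rfl | rfl)
  · refine ⟨mem_unitaryGroup_iff'.mpr ?_, fun p => reflThree_mulVec_mem⟩
    rw [star_reflThree, ← pow_succ, reflThree_pow_three]
  · refine ⟨mem_unitaryGroup_iff'.mpr ?_, fun p => reflFour_mulVec_mem⟩
    rw [star_reflFour, ← pow_succ, reflFour_pow_four]

lemma herm_fin_two (p : Fin 2 → ℂ) : herm p p = (normSq (p 0) + normSq (p 1) : ℝ) := by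
  simp [herm, mul_conj]

lemma congruentPairs_norm_two_cases {p : Fin 2 → ℂ} (hp : p ∈ congruentPairs)
    (hnorm : herm p p = 2) :
    ∃ k : ℕ, p = ζ₁₂ ^ k • ![1 + I, 0] ∨ p = ζ₁₂ ^ k • ![0, 1 + I] ∨
      ∃ j : ℕ, p = ζ₁₂ ^ k • ![1, I ^ j] := by
  obtain ⟨hp1, w, hw, hp0⟩ := hp
  have hp0_mem : p 0 ∈ cyclotomicInts :=
    hp0 ▸ add_mem hp1 (mul_mem one_add_I_mem_cyclotomicInts hw)
  have hnorm' : normSq (p 0) + normSq (p 1) = 2 := by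
    exact_mod_cast (herm_fin_two p).symm.trans hnorm
  have hw_unit (h : normSq ((1 + I) * w) = 2) : ∃ k, w = ζ₁₂ ^ k := by
    refine exists_eq_ζ₁₂_pow_of_normSq_eq_one hw ?_
    rw [normSq_mul, normSq_one_add_I] at h
    linarith
  obtain ⟨q₀, k₀, hq₀, hzero₀, hone₀⟩ := exists_normSq_eq_add_mul_sqrt_three hp0_mem
  obtain ⟨q₁, k₁, hq₁, hzero₁, hone₁⟩ := exists_normSq_eq_add_mul_sqrt_three hp1
  have hq := (eq_zero_of_int_add_int_mul_sqrt_three_eq_zero (m := q₀ + q₁ - 2) (k := k₀ + k₁)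
    (by push_cast; linarith)).1
  obtain h | h | ⟨h₀, h₁⟩ : q₁ = 0 ∨ q₀ = 0 ∨ q₀ = 1 ∧ q₁ = 1 := by omega
  · have h1 := hzero₁ h
    have h0 : p 0 = (1 + I) * w := by rw [hp0, h1, zero_add]
    obtain ⟨k, rfl⟩ := hw_unit (by rw [← h0]; simpa [h1] using hnorm')
    exact ⟨k, Or.inl (by ext i; fin_cases i <;> simp [h0, h1, mul_comm])⟩
  · have h0 := hzero₀ h
    have h1 : p 1 = -((1 + I) * w) := by linear_combination h0 - hp0
    obtain ⟨k, rfl⟩ := hw_unit (by rw [← normSq_neg, ← h1]; simpa [h0] using hnorm')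
    refine ⟨k + 6, Or.inr (Or.inl ?_)⟩
    ext i; fin_cases i <;> simp [h0, h1, mul_comm, pow_add, pow_mul ζ₁₂ 3 2, ζ₁₂_pow_three]
  · obtain ⟨⟨a, ha⟩, b, hb⟩ := And.intro (hone₀ h₀) (hone₁ h₁)
    obtain ⟨j, hj⟩ := exists_ζ₁₂_pow_eq_mul_I_pow (a := a) (b := b)
      ⟨w, hw, by rw [← ha, ← hb, hp0]⟩
    exact ⟨a, Or.inr (Or.inr ⟨j, by ext i; fin_cases i <;> simp [ha, hb, hj]⟩)⟩

lemma exists_reflGroup10_mulVec_eq {p : Fin 2 → ℂ} (hp : p ∈ congruentPairs)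
    (hnorm : herm p p = 2) : ∃ h ∈ reflGroup10, h *ᵥ ![1 + I, 0] = p := by
  obtain ⟨k, rfl | rfl | ⟨j, rfl⟩⟩ := congruentPairs_norm_two_cases hp hnorm
  · exact ⟨_, ζ₁₂_pow_smul_mem_reflGroup10 k (one_mem _), by rw [smul_mulVec, one_mulVec]⟩
  · refine ⟨_, ζ₁₂_pow_smul_mem_reflGroup10 k swap_mem_reflGroup10, ?_⟩
    ext i; fin_cases i <;> simp [mulVec, dotProduct]
  · refine ⟨_, ζ₁₂_pow_smul_mem_reflGroup10 (k + 9) (mul_mem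
      (pow_mem diag_one_I_mem_reflGroup10 (j + 3)) reflFour_mem_reflGroup10), ?_⟩
    have h4 : reflFour *ᵥ ![1 + I, 0] = I • ![1, I] := by
      rw [reflFour_mulVec]
      ext i; fin_cases i <;> simp <;> grind [I_sq]
    rw [smul_mulVec, ← mulVec_mulVec, h4, diag_one_I_pow, mulVec_smul, smul_smul, pow_add,
      pow_mul ζ₁₂ 3 3, ζ₁₂_pow_three, mul_assoc, ← pow_succ, I_pow_four, mul_one]
    have hI : I * I ^ (j + 3) = I ^ j := by
      rw [pow_add, mul_left_comm, ← pow_succ', I_pow_four, mul_one]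
    ext i; fin_cases i <;> simp [hI]

/-- A unitary matrix fixing the first basis direction is diagonal, and its last entry is read off
from the image of `(1, 1)`. -/
lemma mem_reflGroup10_of_mulVec_eq {D : Matrix (Fin 2) (Fin 2) ℂ}
    (hD : D ∈ latticeUnitary congruentPairs) (hfix : D *ᵥ ![1 + I, 0] = ![1 + I, 0]) :
    D ∈ reflGroup10 := by
  obtain ⟨hunit, hpres⟩ := hD
  have h00 : D 0 0 = 1 := by
    have := congrFun hfix 0
    simpa [mulVec, dotProduct, one_add_I_ne_zero] using this
  have h10 : D 1 0 = 0 := by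
    have := congrFun hfix 1
    simpa [mulVec, dotProduct, one_add_I_ne_zero] using this
  have hrow (i) : normSq (D i 0) + normSq (D i 1) = 1 := by
    have h : (normSq (D i 0) + normSq (D i 1) : ℂ) = 1 := by
      simpa [mul_apply, mul_conj] using congrFun₂ (mem_unitaryGroup_iff.mp hunit) i i
    exact_mod_cast h
  have h01 : D 0 1 = 0 := by simpa [h00] using hrow 0
  have h11 : normSq (D 1 1) = 1 := by simpa [h10] using hrow 1
  have hone : ![1, 1] ∈ congruentPairs := ⟨one_mem _, 0, zero_mem _, by simp⟩
  have himage : D *ᵥ ![1, 1] = ![1, D 1 1] := by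
    ext i; fin_cases i <;> simp [mulVec, dotProduct, h00, h01, h10]
  obtain ⟨hmem : D 1 1 ∈ cyclotomicInts, w, hw, hcongr : 1 = D 1 1 + (1 + I) * w⟩ :=
    show ![1, D 1 1] ∈ congruentPairs from himage ▸ hpres _ hone
  obtain ⟨b, hb⟩ := exists_eq_ζ₁₂_pow_of_normSq_eq_one hmem h11
  obtain ⟨j, hj⟩ := exists_ζ₁₂_pow_eq_I_pow (b := b)
    ⟨-w, neg_mem hw, by rw [← hb]; linear_combination -hcongr⟩
  have hD_eq : D = !![1, 0; 0, I] ^ j := by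
    rw [diag_one_I_pow, ← hj, ← hb, eta_fin_two D, h00, h01, h10]
    rfl
  exact hD_eq ▸ pow_mem diag_one_I_mem_reflGroup10 j

theorem latticeUnitary_le_reflGroup10 : latticeUnitary congruentPairs ≤ reflGroup10 := by
  intro M hM
  set e : Fin 2 → ℂ := ![1 + I, 0] with he
  have he_mem : e ∈ congruentPairs := ⟨by simp [he, zero_mem], 1, one_mem _, by simp [he]⟩
  have he_norm : herm e e = 2 := by
    rw [herm_fin_two]
    simp [he, normSq_one_add_I]
  obtain ⟨h, hh, hhe⟩ := exists_reflGroup10_mulVec_eq (hM.2 e he_mem)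
    ((herm_mulVec_mulVec hM.1 e e).trans he_norm)
  have hh_unit := (reflGroup10_le_latticeUnitary hh).1
  have hstab : star h * M ∈ reflGroup10 := by
    refine mem_reflGroup10_of_mulVec_eq
      (mul_mem (reflGroup10_le_latticeUnitary (star_mem_reflGroup10 hh)) hM) ?_
    rw [← mulVec_mulVec, ← he, ← hhe, mulVec_mulVec, mem_unitaryGroup_iff'.mp hh_unit, one_mulVec]
  have hM_eq : M = h * (star h * M) := by
    rw [← mul_assoc, mem_unitaryGroup_iff.mp hh_unit, one_mul]
  exact hM_eq ▸ mul_mem hh hstab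

end RankTwo

section Intertwining

variable {m n : Type*} [Fintype m] [Fintype n] [DecidableEq n] {Φ : Matrix m n ℂ} {c : ℂ}

lemma mulVec_injective_of_conjTranspose_mul_self (hΦ : Φᴴ * Φ = c • 1) (hc : c ≠ 0) :
    Function.Injective (Φ *ᵥ ·) := by
  intro x y hxy
  have := congrArg (Φᴴ *ᵥ ·) hxy
  simpa [mulVec_mulVec, hΦ, smul_mulVec, hc] using this

variable [DecidableEq m] {M : Matrix m m ℂ} {M' : Matrix n n ℂ}

lemma mem_unitaryGroup_of_intertwines (hΦ : Φᴴ * Φ = c • 1) (hc : c ≠ 0)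
    (hM : M ∈ unitaryGroup m ℂ) (h : M * Φ = Φ * M') : M' ∈ unitaryGroup n ℂ := by
  rw [mem_unitaryGroup_iff']
  refine smul_right_injective _ hc ?_
  calc c • (star M' * M') = (Φ * M')ᴴ * (Φ * M') := by
        rw [conjTranspose_mul, Matrix.mul_assoc, ← Matrix.mul_assoc Φᴴ, hΦ, Matrix.smul_mul,
          Matrix.mul_smul, Matrix.one_mul, star_eq_conjTranspose]
    _ = Φᴴ * (star M * M * Φ) := by
        rw [← h, conjTranspose_mul, star_eq_conjTranspose, Matrix.mul_assoc, Matrix.mul_assoc]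
    _ = c • 1 := by rw [mem_unitaryGroup_iff'.mp hM, Matrix.one_mul, hΦ]

lemma mul_conjTranspose_eq_of_intertwines (hM : M ∈ unitaryGroup m ℂ)
    (hM' : M' ∈ unitaryGroup n ℂ) (h : M * Φ = Φ * M') : M' * Φᴴ = Φᴴ * M := by
  have hstar : star M * Φ = Φ * star M' := by
    calc star M * Φ = star M * (Φ * M') * star M' := by
          rw [Matrix.mul_assoc, Matrix.mul_assoc, mem_unitaryGroup_iff.mp hM', Matrix.mul_one]
      _ = Φ * star M' := by
          rw [← h, ← Matrix.mul_assoc, mem_unitaryGroup_iff'.mp hM, Matrix.one_mul]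
  simpa [star_eq_conjTranspose] using congrArg conjTranspose hstar.symm

/-- The adjoint of an intertwiner intertwines unitary matrices too, so the action on a subspace
preserves the orthogonal projection of an invariant lattice. -/
lemma mem_latticeUnitary_image_of_intertwines {L : Set (m → ℂ)} (hΦ : Φᴴ * Φ = c • 1) (hc : c ≠ 0)
    (hM : M ∈ latticeUnitary L) (h : M * Φ = Φ * M') :
    M' ∈ latticeUnitary ((Φᴴ *ᵥ ·) '' L) := by
  have hM' := mem_unitaryGroup_of_intertwines hΦ hc hM.1 h
  refine ⟨hM', ?_⟩
  rintro _ ⟨x, hx, rfl⟩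
  refine ⟨M *ᵥ x, hM.2 x hx, ?_⟩
  simp only [mulVec_mulVec, mul_conjTranspose_eq_of_intertwines hM.1 hM' h]

end Intertwining

section Eigenspace

open Complex

lemma reflMat_zero_zero_zero_one : reflMat ![0, 0, 0, 1] (-1) =
    !![1, 0, 0, 0; 0, 1, 0, 0; 0, 0, 1, 0; 0, 0, 0, -1] := by
  ext i j
  fin_cases i <;> fin_cases j <;> simp [reflMat, herm, Fin.sum_univ_four]

lemma reflMat_one_neg_one_zero_zero : reflMat ![1, -1, 0, 0] (-1) =
    !![0, 1, 0, 0; 1, 0, 0, 0; 0, 0, 1, 0; 0, 0, 0, 1] := by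
  ext i j
  fin_cases i <;> fin_cases j <;> simp [reflMat, herm, Fin.sum_univ_four] <;> ring

lemma reflMat_one_zero_zero_one : reflMat ![1, 0, 0, 1] (-1) =
    !![0, 0, 0, -1; 0, 1, 0, 0; 0, 0, 1, 0; -1, 0, 0, 0] := by
  ext i j
  fin_cases i <;> fin_cases j <;> simp [reflMat, herm, Fin.sum_univ_four]

lemma reflMat_zero_one_one_zero : reflMat ![0, 1, 1, 0] (-1) =
    !![1, 0, 0, 0; 0, 0, -1, 0; 0, -1, 0, 0; 0, 0, 0, 1] := by
  ext i j
  fin_cases i <;> fin_cases j <;> simp [reflMat, herm, Fin.sum_univ_four]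

lemma reflMat_one_zero_one_zero : reflMat ![1, 0, 1, 0] (-1) =
    !![0, 0, -1, 0; 0, 1, 0, 0; -1, 0, 0, 0; 0, 0, 0, 1] := by
  ext i j
  fin_cases i <;> fin_cases j <;> simp [reflMat, herm, Fin.sum_univ_four]

lemma reflMat_one_one_one_one : reflMat ![1, 1, 1, 1] (-1) =
    (1 / 2 : ℂ) • !![1, -1, -1, -1; -1, 1, -1, -1; -1, -1, 1, -1; -1, -1, -1, 1] := by
  ext i j
  fin_cases i <;> fin_cases j <;> simp [reflMat, herm, Fin.sum_univ_four] <;> ring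

lemma reflMat_one_I_one_neg_I : reflMat ![1, I, 1, -I] (-1) =
    (1 / 2 : ℂ) • !![1, I, -1, -I; -I, 1, -I, 1; -1, I, 1, -I; I, 1, I, 1] := by
  ext i j
  fin_cases i <;> fin_cases j <;> simp [reflMat, herm, Fin.sum_univ_four, mul_assoc] <;> ring

lemma reflMat_one_one_I_neg_I : reflMat ![1, 1, I, -I] (-1) =
    (1 / 2 : ℂ) • !![1, -1, I, -I; -1, 1, I, -I; -I, -I, 1, 1; I, I, 1, 1] := by
  ext i j
  fin_cases i <;> fin_cases j <;> simp [reflMat, herm, Fin.sum_univ_four, mul_assoc] <;> ring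

lemma reflMat_one_I_one_I : reflMat ![1, I, 1, I] (-1) =
    (1 / 2 : ℂ) • !![1, I, -1, I; -I, 1, -I, -1; -1, I, 1, I; -I, -1, -I, 1] := by
  ext i j
  fin_cases i <;> fin_cases j <;> simp [reflMat, herm, Fin.sum_univ_four, mul_assoc] <;> ring

lemma exp_pi_mul_I_div_twelve_sq : exp (Real.pi * I / 12) ^ 2 = ζ₁₂ := by
  rw [ζ₁₂, ω₃, ← exp_neg_pi_div_two_mul_I, ← exp_add, ← exp_nat_mul]
  congr 1
  push_cast
  ring

/-- The regular element `g` of order 24 of `G₃₁`. -/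
def regularElement : Matrix (Fin 4) (Fin 4) ℂ :=
  reflMat ![0, 0, 0, 1] (-1) * reflMat ![1, -1, 0, 0] (-1) * reflMat ![1, 0, 0, 1] (-1) *
    reflMat ![1, I, 1, -I] (-1) * reflMat ![1, 1, 1, 1] (-1)

lemma regularElement_eq : regularElement =
    (1 / 2 : ℂ) • !![-1, I, -1, I; 1, I, 1, I; -1, I, 1, -I; 1, I, -1, -I] := by
  have hmonomial : reflMat ![0, 0, 0, 1] (-1) * reflMat ![1, -1, 0, 0] (-1) *
      reflMat ![1, 0, 0, 1] (-1) = !![0, 1, 0, 0; 0, 0, 0, -1; 0, 0, 1, 0; 1, 0, 0, 0] := by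
    rw [reflMat_zero_zero_zero_one, reflMat_one_neg_one_zero_zero, reflMat_one_zero_zero_one]
    simp
  have hrows : !![0, 1, 0, 0; 0, 0, 0, -1; 0, 0, 1, 0; 1, 0, 0, 0] *
      reflMat ![1, I, 1, -I] (-1) =
        (1 / 2 : ℂ) • !![-I, 1, -I, 1; -I, -1, -I, -1; -1, I, 1, -I; 1, I, -1, -I] := by
    rw [reflMat_one_I_one_neg_I, Matrix.mul_smul]
    simp
  rw [regularElement, hmonomial, hrows, reflMat_one_one_one_one, Matrix.smul_mul, Matrix.mul_smul]
  congr 1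
  ext i j
  fin_cases i <;> fin_cases j <;> simp <;> ring

lemma regularElement_sq : regularElement ^ 2 =
    (1 / 2 : ℂ) • !![1 + I, -1 - I, 0, 0; -1 + I, -1 + I, 0, 0;
      0, 0, 1 + I, -1 - I; 0, 0, -1 + I, -1 + I] := by
  rw [regularElement_eq]
  ext i j
  fin_cases i <;> fin_cases j <;> simp [sq] <;> grind [I_sq]

/-- A matrix whose columns are an orthogonal basis of the `ζ₁₂`-eigenspace of `g²`, scaled so that
its adjoint maps `gaussianE8` onto `congruentPairs`. -/
def eigenMatrix : Matrix (Fin 4) (Fin 2) ℂ :=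
  !![(1 - I) / 2, 0; (1 - I) / 2 + ω₃, 0; 0, (1 - I) / 2; 0, (1 - I) / 2 + ω₃]

lemma conjTranspose_eigenMatrix : eigenMatrixᴴ =
    !![(1 + I) / 2, (1 + I) / 2 - 1 - ω₃, 0, 0; 0, 0, (1 + I) / 2, (1 + I) / 2 - 1 - ω₃] := by
  have hω : (starRingEnd ℂ) ω₃ = -1 - ω₃ := star_ω₃
  ext i j
  fin_cases i <;> fin_cases j <;> simp [eigenMatrix, hω] <;> ring

lemma conjTranspose_eigenMatrix_mul_self :
    eigenMatrixᴴ * eigenMatrix = ((3 - √3) / 2 : ℂ) • 1 := by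
  have h3 : (√3 : ℂ) = -I * (1 + 2 * ω₃) := by
    rw [ω₃_eq]
    linear_combination √3 * I_sq
  rw [conjTranspose_eigenMatrix, h3]
  ext i j
  fin_cases i <;> fin_cases j <;> simp [eigenMatrix] <;> grind [I_sq, ω₃_sq]

lemma three_sub_sqrt_three_div_two_ne_zero : ((3 - √3) / 2 : ℂ) ≠ 0 := by
  have h : √3 < 3 := by rw [Real.sqrt_lt' (by norm_num)]; norm_num
  exact_mod_cast (div_pos (sub_pos.mpr h) two_pos).ne'

lemma range_eigenMatrix :
    LinearMap.range eigenMatrix.mulVecLin = eigSpace (regularElement ^ 2) ζ₁₂ := by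
  apply le_antisymm
  · rintro _ ⟨t, rfl⟩
    have h : regularElement ^ 2 * eigenMatrix = ζ₁₂ • eigenMatrix := by
      rw [regularElement_sq, ζ₁₂]
      ext i j
      fin_cases i <;> fin_cases j <;> simp [eigenMatrix] <;> grind [I_sq, ω₃_sq]
    simp only [eigSpace, Module.End.mem_eigenspace_iff, mulVecLin_apply, mulVec_mulVec, h,
      smul_mulVec]
  · intro x hx
    have hx' : regularElement ^ 2 *ᵥ x = ζ₁₂ • x := Module.End.mem_eigenspace_iff.mp hx
    rw [regularElement_sq, ζ₁₂] at hx'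
    have h1 : x 1 = (1 + (1 + I) * ω₃) * x 0 := by
      have h : 1 / 2 * (1 + I) * x 0 + 1 / 2 * (-1 - I) * x 1 = -I * ω₃ * x 0 := by
        simpa [mulVec, dotProduct, Fin.sum_univ_four] using congrFun hx' 0
      linear_combination (-1 + I) * h + (x 1 / 2 - x 0 / 2 - ω₃ * x 0) * I_sq
    have h3 : x 3 = (1 + (1 + I) * ω₃) * x 2 := by
      have h : 1 / 2 * (1 + I) * x 2 + 1 / 2 * (-1 - I) * x 3 = -I * ω₃ * x 2 := by
        simpa [mulVec, dotProduct, Fin.sum_univ_four] using congrFun hx' 2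
      linear_combination (-1 + I) * h + (x 3 / 2 - x 2 / 2 - ω₃ * x 2) * I_sq
    refine ⟨(1 + I) • ![x 0, x 2], ?_⟩
    ext i
    fin_cases i <;> simp [eigenMatrix, h1, h3] <;> grind [I_sq]

lemma conjTranspose_eigenMatrix_mulVec (x : Fin 4 → ℂ) : eigenMatrixᴴ *ᵥ x =
    ![(1 + I) / 2 * (x 0 + x 1) - (1 + ω₃) * x 1, (1 + I) / 2 * (x 2 + x 3) - (1 + ω₃) * x 3] := by
  rw [conjTranspose_eigenMatrix]
  ext i
  fin_cases i <;> simp [mulVec, dotProduct, Fin.sum_univ_four] <;> ring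

lemma conjTranspose_eigenMatrix_mulVec_mem {x : Fin 4 → ℂ} (hx : x ∈ gaussianE8) :
    eigenMatrixᴴ *ᵥ x ∈ congruentPairs := by
  obtain ⟨hx0, hx, s, hs, hxs⟩ := hx
  choose w hw hxw using hx
  rw [Fin.sum_univ_four] at hxs
  have hle := gaussianInts_le_cyclotomicInts
  have hI := I_mem_cyclotomicInts
  have h1I := one_add_I_mem_cyclotomicInts
  have h1ω : 1 + ω₃ ∈ cyclotomicInts := add_mem (one_mem _) ω₃_mem_cyclotomicInts
  have hx3 : x 3 ∈ cyclotomicInts := hxw 3 ▸ add_mem (hle hx0) (mul_mem h1I (hle (hw 3)))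
  have hlast : (1 + I) / 2 * (x 2 + x 3) - (1 + ω₃) * x 3 =
      (1 + I) * x 0 + I * (w 2 + w 3) - (1 + ω₃) * x 3 := by
    linear_combination (1 + I) / 2 * (hxw 2 + hxw 3) + (w 2 + w 3) / 2 * I_sq
  rw [conjTranspose_eigenMatrix_mulVec]
  refine ⟨?_, s - 2 * x 0 - (1 + I) * (w 2 + w 3) - (1 + ω₃) * (w 1 - w 3), ?_, ?_⟩
  · simp only [cons_val_one, cons_val_fin_one, hlast]
    exact sub_mem (add_mem (mul_mem h1I (hle hx0)) (mul_mem hI (hle (add_mem (hw 2) (hw 3)))))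
      (mul_mem h1ω hx3)
  · exact sub_mem (sub_mem (hle (sub_mem hs (mul_mem (ofNat_mem _ 2) hx0)))
      (mul_mem h1I (hle (add_mem (hw 2) (hw 3))))) (mul_mem h1ω (hle (sub_mem (hw 1) (hw 3))))
  · simp only [cons_val_zero, cons_val_one, cons_val_fin_one]
    linear_combination (1 + I) / 2 * hxs - (1 + I) * (hxw 2 + hxw 3)
      - (1 + ω₃) * (hxw 1 - hxw 3)

lemma exists_mem_gaussianE8_of_mem_congruentPairs {p : Fin 2 → ℂ} (hp : p ∈ congruentPairs) :
    ∃ x ∈ gaussianE8, eigenMatrixᴴ *ᵥ x = p := by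
  obtain ⟨⟨α, hα, β, hβ, hp1⟩, _, ⟨γ, hγ, δ, hδ, rfl⟩, hp0⟩ := hp
  have hI := I_mem_gaussianInts
  have h1I : 1 - I ∈ gaussianInts := sub_mem (one_mem _) hI
  have hμ : α - β ∈ gaussianInts := sub_mem hα hβ
  have hν : γ - δ ∈ gaussianInts := sub_mem hγ hδ
  have hβ' : β + (1 + I) * δ ∈ gaussianInts := add_mem hβ (mul_mem (add_mem (one_mem _) hI) hδ)
  refine ⟨![(1 - I) * (α - β) + 2 * (γ - δ) + (β + (1 + I) * δ), -(β + (1 + I) * δ),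
    (1 - I) * (α - β) + β, -β], ⟨?_, fun j => ?_, ?_⟩, ?_⟩
  · exact add_mem (add_mem (mul_mem h1I hμ) (mul_mem (ofNat_mem _ 2) hν)) hβ'
  · fin_cases j
    · exact ⟨0, zero_mem _, by simp⟩
    · refine ⟨I * (α - β) - (1 - I) * (β + (1 + I) * δ + (γ - δ)),
        sub_mem (mul_mem hI hμ) (mul_mem h1I (add_mem hβ' hν)), ?_⟩
      simp only [Fin.mk_one, cons_val_one, cons_val_zero]
      grind [I_sq]
    · refine ⟨-((1 - I) * (γ - δ)) - δ, sub_mem (neg_mem (mul_mem h1I hν)) hδ, ?_⟩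
      simp only [Fin.reduceFinMk, cons_val, cons_val_zero]
      grind [I_sq]
    · refine ⟨I * (α - β) - (1 - I) * (β + (γ - δ)) - δ,
        sub_mem (sub_mem (mul_mem hI hμ) (mul_mem h1I (add_mem hβ hν))) hδ, ?_⟩
      simp only [Fin.reduceFinMk, cons_val, cons_val_zero]
      grind [I_sq]
  · refine ⟨(1 - I) * (α - β) + (γ - δ), add_mem (mul_mem h1I hμ) hν, ?_⟩
    simp only [Fin.sum_univ_four, cons_val_zero, cons_val_one, cons_val]
    ring
  · rw [conjTranspose_eigenMatrix_mulVec]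
    ext i
    fin_cases i <;> simp [hp0, hp1] <;> grind [I_sq]

theorem image_gaussianE8_eigenMatrix :
    (eigenMatrixᴴ *ᵥ ·) '' (gaussianE8 : Set (Fin 4 → ℂ)) = congruentPairs :=
  Set.Subset.antisymm (Set.image_subset_iff.mpr fun _ => conjTranspose_eigenMatrix_mulVec_mem)
    fun _ => exists_mem_gaussianE8_of_mem_congruentPairs

theorem mem_reflGroup10_of_intertwines {M : Matrix (Fin 4) (Fin 4) ℂ}
    {M' : Matrix (Fin 2) (Fin 2) ℂ} (hM : M ∈ reflGroup31)
    (h : M * eigenMatrix = eigenMatrix * M') : M' ∈ reflGroup10 := by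
  refine latticeUnitary_le_reflGroup10 ?_
  rw [← image_gaussianE8_eigenMatrix]
  exact mem_latticeUnitary_image_of_intertwines conjTranspose_eigenMatrix_mul_self
    three_sub_sqrt_three_div_two_ne_zero (reflGroup31_le_latticeUnitary hM) h

lemma reflMat_mem_reflGroup31 {v : Fin 4 → ℂ} (hv : v ∈ rootsG31) :
    reflMat v (-1) ∈ reflGroup31 :=
  Submonoid.subset_closure ⟨v, hv, rfl⟩

lemma reflMat_I_pow_mem_reflGroup31 {v : Fin 4 → ℂ} (t : Fin 4 → ℕ)
    (ht : Even (t 0 + t 1 + t 2 + t 3)) (hv : ∀ i, v i = I ^ t i) :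
    reflMat v (-1) ∈ reflGroup31 :=
  reflMat_mem_reflGroup31 (Or.inr ⟨t, ht, funext hv⟩)

lemma reflMat_single_add_single_mem_reflGroup31 {v : Fin 4 → ℂ} {p q : Fin 4} (hpq : p < q)
    (hv : v = Pi.single p 1 + Pi.single q 1) : reflMat v (-1) ∈ reflGroup31 :=
  reflMat_mem_reflGroup31 (Or.inl (Or.inl ⟨p, q, 2, hpq, by norm_num, by simp [hv]⟩))

lemma exists_reflGroup31_mul_eigenMatrix_eq_mul_reflThree :
    ∃ M ∈ reflGroup31, M * eigenMatrix = eigenMatrix * reflThree := by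
  refine ⟨reflMat ![0, 1, 1, 0] (-1) * reflMat ![1, 1, I, -I] (-1), mul_mem
    (reflMat_single_add_single_mem_reflGroup31 (p := 1) (q := 2) (by decide) ?_)
    (reflMat_I_pow_mem_reflGroup31 ![0, 0, 1, 3] (by decide) ?_), ?_⟩
  · ext i; fin_cases i <;> simp
  · intro i; fin_cases i <;> simp [I_pow_three]
  · rw [reflMat_zero_one_one_zero, reflMat_one_one_I_neg_I]
    ext i j
    fin_cases i <;> fin_cases j <;> simp [eigenMatrix, reflThree] <;> grind [I_sq, ω₃_sq]

lemma exists_reflGroup31_mul_eigenMatrix_eq_mul_reflFour :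
    ∃ M ∈ reflGroup31, M * eigenMatrix = eigenMatrix * reflFour := by
  refine ⟨reflMat ![1, 0, 1, 0] (-1) * reflMat ![1, I, 1, I] (-1) * reflMat ![1, 1, 1, 1] (-1),
    mul_mem (mul_mem
      (reflMat_single_add_single_mem_reflGroup31 (p := 0) (q := 2) (by decide) ?_)
      (reflMat_I_pow_mem_reflGroup31 ![0, 1, 0, 1] (by decide) ?_))
      (reflMat_I_pow_mem_reflGroup31 0 (by decide) ?_), ?_⟩
  · ext i; fin_cases i <;> simp
  · intro i; fin_cases i <;> simp
  · intro i; fin_cases i <;> simp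
  · rw [reflMat_one_zero_one_zero, reflMat_one_I_one_I, reflMat_one_one_one_one]
    ext i j
    fin_cases i <;> fin_cases j <;> simp [eigenMatrix, reflFour] <;> grind [I_sq, ω₃_sq]

theorem exists_reflGroup31_mul_eigenMatrix_eq {M' : Matrix (Fin 2) (Fin 2) ℂ}
    (hM' : M' ∈ reflGroup10) : ∃ M ∈ reflGroup31, M * eigenMatrix = eigenMatrix * M' := by
  induction hM' using Submonoid.closure_induction with
  | mem M' hM' =>
    rcases hM' with rfl | rfl
    · exact exists_reflGroup31_mul_eigenMatrix_eq_mul_reflThree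
    · exact exists_reflGroup31_mul_eigenMatrix_eq_mul_reflFour
  | one => exact ⟨1, one_mem _, by rw [Matrix.one_mul, Matrix.mul_one]⟩
  | mul A' B' _ _ hA hB =>
    obtain ⟨A, hA, hA_eq⟩ := hA
    obtain ⟨B, hB, hB_eq⟩ := hB
    exact ⟨A * B, mul_mem hA hB, by
      rw [Matrix.mul_assoc, hB_eq, ← Matrix.mul_assoc, hA_eq, Matrix.mul_assoc]⟩

end Eigenspace

/-- The `12`-reflection subquotient of `G₃₁` is isomorphic to `G₁₀`:
with `ζ = e^{πi/12}`, `ω = e^{2πi/3}`, `g` the product of the five listed reflections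
of `G₃₁`, and `E` the `ζ^2`-eigenspace of `g^2` (a `2`-dimensional subspace), there is
a `ℂ`-linear isomorphism `ψ : E ≅ ℂ^2` conjugating `π_E(N_E)` onto `G₁₀`. -/
theorem statement_18 (ζ ω : ℂ) (hζ : ζ = Complex.exp (Real.pi * Complex.I / 12))
    (hω : ω = Complex.exp (2 * Real.pi * Complex.I / 3))
    (G31 : Submonoid (Matrix (Fin 4) (Fin 4) ℂ))
    (hG31 : G31 = Submonoid.closure {M | ∃ v ∈ rootsG31, M = reflMat v (-1)})
    (g : Matrix (Fin 4) (Fin 4) ℂ)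
    (hg : g = reflMat ![0, 0, 0, 1] (-1) * reflMat ![1, -1, 0, 0] (-1) *
      reflMat ![1, 0, 0, 1] (-1) *
      reflMat ![1, Complex.I, 1, -Complex.I] (-1) * reflMat ![1, 1, 1, 1] (-1))
    (E : Submodule ℂ (Fin 4 → ℂ)) (hE : E = eigSpace (g ^ 2) (ζ ^ 2))
    (r₁ r₄' : Matrix (Fin 2) (Fin 2) ℂ)
    (hr₁ : r₁ = (ω / 2) • !![-1 - Complex.I, 1 - Complex.I;
      -1 - Complex.I, -1 + Complex.I])
    (hr₄' : r₄' = (1 / 2 : ℂ) • !![1 + Complex.I, -1 + Complex.I;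
      -1 + Complex.I, 1 + Complex.I])
    (G10 : Submonoid (Matrix (Fin 2) (Fin 2) ℂ))
    (hG10 : G10 = Submonoid.closure {r₁, r₄'}) :
    Module.finrank ℂ E = 2 ∧
    ∃ Φ : (Fin 2 → ℂ) →ₗ[ℂ] (Fin 4 → ℂ), Function.Injective Φ ∧
      LinearMap.range Φ = E ∧
      (G10 : Set (Matrix (Fin 2) (Fin 2) ℂ)) =
        {M' | ∃ M ∈ G31, (∀ v ∈ E, M.mulVec v ∈ E) ∧
          ∀ t : Fin 2 → ℂ, M.mulVec (Φ t) = Φ (M'.mulVec t)} := by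
  have hζ' : ζ ^ 2 = ζ₁₂ := by rw [hζ, exp_pi_mul_I_div_twelve_sq]
  rw [hζ', hg, ← regularElement, ← range_eigenMatrix] at hE
  rw [hω, ← ω₃] at hr₁
  rw [hr₁, hr₄', ← reflThree, ← reflFour, ← reflGroup10] at hG10
  rw [← reflGroup31] at hG31
  subst hG10 hG31 hE
  have hinj : Function.Injective eigenMatrix.mulVecLin := mulVec_injective_of_conjTranspose_mul_self
    conjTranspose_eigenMatrix_mul_self three_sub_sqrt_three_div_two_ne_zero
  refine ⟨by rw [LinearMap.finrank_range_of_inj hinj, Module.finrank_fin_fun],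
    eigenMatrix.mulVecLin, hinj, rfl, Set.Subset.antisymm (fun M' hM' => ?_) ?_⟩
  · obtain ⟨M, hM, hMM'⟩ := exists_reflGroup31_mul_eigenMatrix_eq hM'
    have hcomm (t) : M *ᵥ (eigenMatrix *ᵥ t) = eigenMatrix *ᵥ (M' *ᵥ t) := by
      rw [mulVec_mulVec, mulVec_mulVec, hMM']
    refine ⟨M, hM, ?_, hcomm⟩
    rintro _ ⟨t, rfl⟩
    exact ⟨_, (hcomm t).symm⟩
  · rintro M' ⟨M, hM, -, hcomm⟩
    refine mem_reflGroup10_of_intertwines hM (mulVec_injective (funext fun t => ?_))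
    simpa only [mulVecLin_apply, mulVec_mulVec] using hcomm t

end
end Paper
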